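/- Let X be a measurable space, let D be a probability measure on X × {−1, 1}, let H : X → ℝ be a bounded measurable function, and let h* : X → {−1, 1} be a measurable binary classifier. Define sign(u) = 1 if u ≥ 0 and sign(u) = −1 if u < 0. Then Φ′_D(H, sign∘H) − Φ′_D(H, h*) ≥ corr_D(h*) − corr_D(sign∘H), where Φ′_D(H, h) = E_{(x,y)∼D}[φ′(y·H(x))·y·h(x)] and corr_D(h) = E_{(x,y)∼D}[y·h(x)]. -/

import Mathlib

open MeasureTheory

/-- The potential function φ(z) = 2 − z for z ≤ 0 and φ(z) = (z + 2)·exp(−z) for z > 0. -/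
noncomputable def phi (z : ℝ) : ℝ := if z ≤ 0 then 2 - z else (z + 2) * Real.exp (-z)

/-- The derivative: φ′(z) = −1 for z ≤ 0 and φ′(z) = −(z + 1)·exp(−z) for z > 0. -/
noncomputable def phi' (z : ℝ) : ℝ := if z ≤ 0 then -1 else -(z + 1) * Real.exp (-z)

/-- The sign function with the convention sign(u) = 1 for u ≥ 0 and sign(u) = −1 for u < 0. -/
noncomputable def sgn (u : ℝ) : ℝ := if 0 ≤ u then 1 else -1

theorem phi'_bounds (z : ℝ) : -1 ≤ phi' z ∧ phi' z ≤ 0 := by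
  unfold phi'
  split_ifs with h
  · norm_num
  · push Not at h
    have h1 : z + 1 ≤ Real.exp z := Real.add_one_le_exp z
    have h2 : 0 < Real.exp (-z) := Real.exp_pos _
    have h3 : Real.exp z * Real.exp (-z) = 1 := by rw [← Real.exp_add]; simp
    constructor <;> nlinarith

theorem phi'_measurable : Measurable phi' := by
  unfold phi'
  exact Measurable.ite measurableSet_Iic (by fun_prop) (by fun_prop)

theorem sgn_measurable : Measurable sgn := by
  unfold sgn
  exact Measurable.ite measurableSet_Ici (by fun_prop) (by fun_prop)

theorem abs_sgn (u : ℝ) : |sgn u| = 1 := by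
  unfold sgn
  split_ifs <;> simp

theorem conservation_pointwise (y u s : ℝ) (hy : y = 1 ∨ y = -1) (hs : s = 1 ∨ s = -1) :
    y * s - y * sgn u ≤ phi' (y * u) * y * sgn u - phi' (y * u) * y * s := by
  suffices h : 0 ≤ (phi' (y * u) + 1) * (y * sgn u - y * s) by nlinarith
  by_cases hz : y * u ≤ 0
  · simp [phi', hz]
  · have hb := (phi'_bounds (y * u)).1
    apply mul_nonneg (by linarith)
    unfold sgn
    rcases hy with rfl | rfl <;> rcases hs with rfl | rfl <;> split_ifs <;> norm_num <;> linarith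

/-- Conservation-type lemma:
Φ′_D(H, sign∘H) − Φ′_D(H, h*) ≥ corr_D(h*) − corr_D(sign∘H). -/
theorem conservation_lemma {X : Type*} [MeasurableSpace X]
    (D : Measure (X × ℝ)) [IsProbabilityMeasure D]
    (hlab : ∀ᵐ p ∂D, p.2 = 1 ∨ p.2 = -1)
    (H : X → ℝ) (hHmeas : Measurable H) (hHbd : ∃ C : ℝ, ∀ x, |H x| ≤ C)
    (hstar : X → ℝ) (hstarmeas : Measurable hstar)
    (hstarbin : ∀ x, hstar x = 1 ∨ hstar x = -1) :
    (∫ p, phi' (p.2 * H p.1) * p.2 * sgn (H p.1) ∂D) -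
        (∫ p, phi' (p.2 * H p.1) * p.2 * hstar p.1 ∂D) ≥
      (∫ p, p.2 * hstar p.1 ∂D) - ∫ p, p.2 * sgn (H p.1) ∂D := by
  have hphi : Measurable fun p : X × ℝ => phi' (p.2 * H p.1) :=
    phi'_measurable.comp (by fun_prop)
  have hsg : Measurable fun p : X × ℝ => sgn (H p.1) := sgn_measurable.comp (by fun_prop)
  have hst : Measurable fun p : X × ℝ => hstar p.1 := by fun_prop
  have hy : ∀ y : ℝ, y = 1 ∨ y = -1 → |y| = 1 := by
    rintro y (rfl | rfl) <;> simp
  have hpb : ∀ z, |phi' z| ≤ 1 := fun z =>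
    abs_le.2 ⟨(phi'_bounds z).1, (phi'_bounds z).2.trans zero_le_one⟩
  have i1 : Integrable (fun p : X × ℝ => phi' (p.2 * H p.1) * p.2 * sgn (H p.1)) D := by
    refine Integrable.of_bound (by fun_prop) 1 ?_
    filter_upwards [hlab] with p hp
    simp [abs_mul, hy _ hp, abs_sgn, hpb]
  have i2 : Integrable (fun p : X × ℝ => phi' (p.2 * H p.1) * p.2 * hstar p.1) D := by
    refine Integrable.of_bound (by fun_prop) 1 ?_
    filter_upwards [hlab] with p hp
    simp [abs_mul, hy _ hp, hy _ (hstarbin p.1), hpb]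
  have i3 : Integrable (fun p : X × ℝ => p.2 * hstar p.1) D := by
    refine Integrable.of_bound (by fun_prop) 1 ?_
    filter_upwards [hlab] with p hp
    simp [abs_mul, hy _ hp, hy _ (hstarbin p.1)]
  have i4 : Integrable (fun p : X × ℝ => p.2 * sgn (H p.1)) D := by
    refine Integrable.of_bound (by fun_prop) 1 ?_
    filter_upwards [hlab] with p hp
    simp [abs_mul, hy _ hp, abs_sgn]
  rw [ge_iff_le, ← integral_sub i1 i2, ← integral_sub i3 i4]
  refine integral_mono_ae (i3.sub i4) (i1.sub i2) ?_
  filter_upwards [hlab] with p hp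
  exact conservation_pointwise _ _ _ hp (hstarbin p.1)
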